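/- Let l, m, k be positive integers with l ≤ m. Then f_k([l,m]) = Σ_{d=1}^{m} μ(d) · C(⌊m/d⌋ − ⌊(l−1)/d⌋, k), where C(·,·) denotes the binomial coefficient. -/

import Mathlib

/-! Since `∑ d ∈ n.divisors, μ d` is the indicator of `n = 1`, the sets `X` with `gcd X = 1` are
counted by `∑ d, μ d * #{X | d ∣ gcd X}`. Now `d ∣ gcd X` says that `X` consists of multiples of
`d`, so the inner count is a binomial coefficient in the number of multiples of `d` in `[l, m]`. -/

open Finset ArithmeticFunction

theorem sum_divisors_moebius (n : ℕ) : ∑ d ∈ n.divisors, moebius d = if n = 1 then 1 else 0 := by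
  rw [← coe_mul_zeta_apply, moebius_mul_coe_zeta, one_apply]

theorem mem_Icc_one_of_dvd {d n m : ℕ} (hd : d ∣ n) (hn : n ∈ Icc 1 m) : d ∈ Icc 1 m := by
  obtain ⟨n_pos, n_le⟩ := mem_Icc.mp hn
  exact mem_Icc.mpr ⟨Nat.pos_of_dvd_of_pos hd n_pos, (Nat.le_of_dvd n_pos hd).trans n_le⟩

theorem filter_dvd_Icc_one_eq_divisors {n m : ℕ} (hn : n ∈ Icc 1 m) :
    {d ∈ Icc 1 m | d ∣ n} = n.divisors := by
  have n_ne_zero : n ≠ 0 := Nat.one_le_iff_ne_zero.mp (mem_Icc.mp hn).1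
  ext d
  rw [mem_filter, Nat.mem_divisors]
  exact ⟨fun ⟨_, hd⟩ ↦ ⟨hd, n_ne_zero⟩, fun ⟨hd, _⟩ ↦ ⟨mem_Icc_one_of_dvd hd hn, hd⟩⟩

theorem card_filter_eq_one_eq_sum_moebius {ι : Type*} {s : Finset ι} {g : ι → ℕ} {m : ℕ}
    (hg : ∀ i ∈ s, g i ∈ Icc 1 m) :
    (#{i ∈ s | g i = 1} : ℤ) = ∑ d ∈ Icc 1 m, moebius d * #{i ∈ s | d ∣ g i} :=
  calc (#{i ∈ s | g i = 1} : ℤ)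
      = ∑ i ∈ s, if g i = 1 then 1 else 0 := natCast_card_filter _ _
    _ = ∑ i ∈ s, ∑ d ∈ Icc 1 m with d ∣ g i, moebius d :=
        sum_congr rfl fun i hi ↦ by
          rw [filter_dvd_Icc_one_eq_divisors (hg i hi), sum_divisors_moebius]
    _ = ∑ d ∈ Icc 1 m, ∑ i ∈ s with d ∣ g i, moebius d := by
        simp only [sum_filter]
        exact sum_comm
    _ = ∑ d ∈ Icc 1 m, moebius d * #{i ∈ s | d ∣ g i} := by
        simp only [sum_const, nsmul_eq_mul, mul_comm]

theorem filter_dvd_gcd_powersetCard {ι α : Type*} [CommMonoidWithZero α] [NormalizedGCDMonoid α]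
    (A : Finset ι) (f : ι → α) (k : ℕ) (d : α) [DecidablePred (d ∣ ·)] :
    {X ∈ A.powersetCard k | d ∣ X.gcd f} = powersetCard k {a ∈ A | d ∣ f a} := by
  ext X
  simp only [mem_filter, mem_powersetCard, Finset.dvd_gcd_iff, subset_iff, forall_and]
  exact and_right_comm

theorem card_filter_gcd_eq_one_powersetCard {ι : Type*} {A : Finset ι} {f : ι → ℕ} {m k : ℕ}
    (hf : ∀ a ∈ A, f a ∈ Icc 1 m) (hk : 0 < k) :
    (#{X ∈ A.powersetCard k | X.gcd f = 1} : ℤ)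
      = ∑ d ∈ Icc 1 m, moebius d * (#{a ∈ A | d ∣ f a}).choose k := by
  have gcd_mem : ∀ X ∈ A.powersetCard k, X.gcd f ∈ Icc 1 m := fun X hX ↦ by
    obtain ⟨X_sub, X_card⟩ := mem_powersetCard.mp hX
    obtain ⟨a, ha⟩ : X.Nonempty := card_pos.mp (X_card ▸ hk)
    exact mem_Icc_one_of_dvd (gcd_dvd ha) (hf a (X_sub ha))
  simp only [card_filter_eq_one_eq_sum_moebius gcd_mem, filter_dvd_gcd_powersetCard,
    card_powersetCard]

theorem card_filter_dvd_Ioc (a b d : ℕ) : #{x ∈ Ioc a b | d ∣ x} = b / d - a / d := by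
  obtain hab | hba := le_total a b
  · have split : #{x ∈ Ioc 0 a | d ∣ x} + #{x ∈ Ioc a b | d ∣ x} = #{x ∈ Ioc 0 b | d ∣ x} := by
      rw [← Ioc_union_Ioc_eq_Ioc a.zero_le hab, filter_union,
        card_union_of_disjoint (disjoint_filter_filter (Ioc_disjoint_Ioc_of_le le_rfl))]
    rw [Nat.Ioc_filter_dvd_card_eq_div, Nat.Ioc_filter_dvd_card_eq_div] at split
    exact Nat.eq_sub_of_add_eq' split
  · rw [Ioc_eq_empty_of_le hba, filter_empty, card_empty,
      Nat.sub_eq_zero_of_le (Nat.div_le_div_right hba)]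

/-- Corollary (Ayad–Kihel) (b): `f_k([l,m]) = ∑_{d=1}^{m} μ(d) C(⌊m/d⌋ - ⌊(l-1)/d⌋, k)`,
where `f_k(A)` counts the `k`-element relatively prime subsets of `A`. -/
theorem stmt_12 (l m k : ℕ) (hl : 0 < l) (hk : 0 < k) (h : l ≤ m) :
    ((((Finset.Icc l m).powerset).filter
        (fun X : Finset ℕ => X.card = k ∧ X.gcd id = 1)).card : ℤ)
      = ∑ d ∈ Finset.Icc 1 m,
          (ArithmeticFunction.moebius d) * (Nat.choose (m / d - (l - 1) / d) k) := by
  have Icc_eq : Icc l m = Ioc (l - 1) m := by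
    rw [← Icc_add_one_left_eq_Ioc, Nat.sub_one_add_one hl.ne']
  have mem_Icc_one : ∀ a ∈ Icc l m, id a ∈ Icc 1 m := fun a ha ↦ Icc_subset_Icc_left hl ha
  rw [← filter_filter, ← powersetCard_eq_filter,
    card_filter_gcd_eq_one_powersetCard mem_Icc_one hk]
  simp only [id_eq, Icc_eq, card_filter_dvd_Ioc]
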